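/- arXiv:1404.7694 — 4 statements merged into one kernel-verified Lean document; each statement's English description precedes it below -/
import Mathlib

section
/- Let d ≥ 2 be an integer, fix k with 2 ≤ k ≤ d, and fix positive reals e_j > 0 for each j ∈ {2,…,d} with j ≠ k. For a complex number z with Im z > 0, define Φ(z) = ∫₀^∞ [ Log( τ^d + τ^{d−1} + Σ_{j∈{2,…,d}, j≠k} e_j τ^{d−j} + z·τ^{d−k} ) + (1−d)·ln τ − ln(τ+1) ] dτ, where Log is the principal branch of the complex logarithm and the integral is over τ ∈ (0,∞). Then Im Φ(z) > 0. (That is, the entropy H(1,e₂,…,e_d) is a Pick function of each variable e_k separately: its analytic continuation maps the upper half-plane into itself.) -/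
open MeasureTheory Real

/-!
For `τ > 0` the integrand equals `Log (P(τ) / (τ ^ (d - 1) * (τ + 1)))`, where `P` is the polynomial
inside the logarithm. The quotient is `1 + O(τ⁻²)` at infinity, and a logarithm of a meromorphic
function is locally integrable, so the integral converges. The quotient lies in the open upper half
plane whenever the coefficients of `P` lie in the closed one and are not all real; its argument is
then positive, and this argument is the imaginary part of the integrand.
-/

open Asymptotics Filter Function Set Topology

lemma im_setIntegral_pos {X : Type*} [MeasurableSpace X] {μ : Measure X} {s : Set X} {f : X → ℂ}
    (hs : MeasurableSet s) (hμ : μ s ≠ 0) (hf : IntegrableOn f s μ)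
    (hpos : ∀ x ∈ s, 0 < (f x).im) : 0 < (∫ x in s, f x ∂μ).im := by
  have h_im : (∫ x in s, f x ∂μ).im = ∫ x in s, (f x).im ∂μ :=
    (Complex.imCLM.integral_comp_comm hf).symm
  have h_nonneg : 0 ≤ᵐ[μ.restrict s] fun x ↦ (f x).im :=
    ae_restrict_of_forall_mem hs fun x hx ↦ (hpos x hx).le
  have h_support : support (fun x ↦ (f x).im) ∩ s = s :=
    inter_eq_right.2 fun x hx ↦ (hpos x hx).ne'
  rw [h_im, setIntegral_pos_iff_support_of_nonneg_ae h_nonneg hf.im, h_support]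
  exact pos_iff_ne_zero.2 hμ

section Log

lemma im_log_pos {z : ℂ} (hz : 0 < z.im) : 0 < (Complex.log z).im := by
  rw [Complex.log_im]
  refine (Complex.arg_nonneg_iff.2 hz.le).lt_of_ne' fun h ↦ ?_
  exact hz.ne' (Complex.arg_eq_zero_iff.1 h).2

lemma norm_log_le_abs_log_norm_add_pi (z : ℂ) : ‖Complex.log z‖ ≤ |Real.log ‖z‖| + π := by
  calc ‖Complex.log z‖ ≤ |(Complex.log z).re| + |(Complex.log z).im| :=
        Complex.norm_le_abs_re_add_abs_im _
    _ ≤ |Real.log ‖z‖| + π := by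
        rw [Complex.log_re, Complex.log_im]
        gcongr
        exact Complex.abs_arg_le_pi z

lemma log_div_ofReal {z : ℂ} (hz : z ≠ 0) {r : ℝ} (hr : 0 < r) :
    Complex.log (z / r) = Complex.log z - Real.log r := by
  rw [div_eq_mul_inv, ← Complex.ofReal_inv, Complex.log_mul_ofReal _ (inv_pos.2 hr) _ hz,
    Real.log_inv, Complex.ofReal_neg]
  ring

lemma isBigO_log_sub_one {α : Type*} {l : Filter α} {f : α → ℂ} (hf : Tendsto f l (𝓝 1)) :
    (fun x ↦ Complex.log (f x)) =O[l] fun x ↦ f x - 1 := by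
  simpa only [comp_def, Complex.log_one, sub_zero] using
    (Complex.hasDerivAt_log Complex.one_mem_slitPlane).isBigO_sub.comp_tendsto hf

variable {f : ℝ → ℂ}

lemma locallyIntegrable_log_of_meromorphic (hf : Meromorphic f) :
    LocallyIntegrable fun t ↦ Complex.log (f t) := by
  have h_meas : Measurable fun t ↦ Complex.log (f t) := Complex.measurable_log.comp hf.measurable
  have h_uIcc (a b : ℝ) : IntegrableOn (fun t ↦ Complex.log (f t)) (uIcc a b) := by
    have h_norm : IntegrableOn (fun t ↦ Real.log ‖f t‖) (uIcc a b) :=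
      (intervalIntegrable_iff' (by simp)).1 hf.meromorphicOn.intervalIntegrable_log_norm
    refine (h_norm.abs.add (integrableOn_const (C := π) (by simp))).mono'
      h_meas.aestronglyMeasurable (ae_of_all _ fun t ↦ norm_log_le_abs_log_norm_add_pi (f t))
  intro x
  have h_nhds : uIcc (x - 1) (x + 1) ∈ 𝓝 x :=
    mem_of_superset (Icc_mem_nhds (by linarith) (by linarith)) Icc_subset_uIcc
  exact ⟨_, h_nhds, h_uIcc _ _⟩

lemma integrableOn_Ioi_log_of_isBigO_rpow {s : ℝ} (hs : s < -1) (a : ℝ) (hf : Meromorphic f)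
    (hO : (fun t ↦ f t - 1) =O[atTop] fun t : ℝ ↦ t ^ s) :
    IntegrableOn (fun t ↦ Complex.log (f t)) (Ioi a) := by
  have h_rpow : Tendsto (fun t : ℝ ↦ t ^ s) atTop (𝓝 0) := by
    simpa only [neg_neg] using tendsto_rpow_neg_atTop (y := -s) (by linarith)
  have h_one : Tendsto f atTop (𝓝 1) := tendsto_sub_nhds_zero_iff.1 (hO.trans_tendsto h_rpow)
  have h_log : (fun t ↦ Complex.log (f t)) =O[atTop] fun t : ℝ ↦ t ^ s :=
    (isBigO_log_sub_one h_one).trans hO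
  have h_Ici : IntegrableOn (fun t ↦ Complex.log (f t)) (Ici a) :=
    ((locallyIntegrable_log_of_meromorphic hf).locallyIntegrableOn _).integrableOn_of_isBigO_atTop
      h_log (integrableAtFilter_rpow_atTop_iff.2 hs)
  exact h_Ici.mono_set Ioi_subset_Ici_self

end Log

lemma isBigO_pow_div_pow_mul_add_one {m n : ℕ} (h : m < n) :
    (fun t : ℝ ↦ t ^ m / (t ^ n * (t + 1))) =O[atTop] fun t : ℝ ↦ t ^ (-2 : ℝ) := by
  refine IsBigO.of_bound' ?_
  filter_upwards [eventually_ge_atTop 1] with t ht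
  have ht0 : 0 < t := by linarith
  rw [norm_of_nonneg (by positivity), norm_of_nonneg (by positivity), rpow_neg ht0.le, rpow_two,
    ← one_div, div_le_div_iff₀ (by positivity) (by positivity), one_mul]
  calc t ^ m * t ^ 2 = t ^ (m + 1) * t := by ring
    _ ≤ t ^ n * (t + 1) :=
        mul_le_mul (pow_le_pow_right₀ ht h) (by linarith) ht0.le (by positivity)

/-- The polynomial `∏ (τ + pᵢ)` in terms of the elementary symmetric polynomials
`1, 1, c 2, …, c d` of the `pᵢ`, for complex values of `c 2, …, c d`. -/
def esymmPoly (d : ℕ) (c : ℕ → ℂ) (τ : ℝ) : ℂ :=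
  (τ : ℂ) ^ d + (τ : ℂ) ^ (d - 1) + ∑ j ∈ Finset.Icc 2 d, c j * (τ : ℂ) ^ (d - j)

/-- `esymmPoly d c` divided by the sum of its two leading terms (for `d ≥ 1`); the entropy is the
integral of the logarithm of this quotient. -/
noncomputable def esymmRatio (d : ℕ) (c : ℕ → ℂ) (τ : ℝ) : ℂ :=
  esymmPoly d c τ / (τ ^ (d - 1) * (τ + 1) : ℝ)

section EsymmPoly

variable {d : ℕ} {c : ℕ → ℂ} {τ : ℝ}

lemma im_esymmPoly (d : ℕ) (c : ℕ → ℂ) (τ : ℝ) :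
    (esymmPoly d c τ).im = ∑ j ∈ Finset.Icc 2 d, (c j).im * τ ^ (d - j) := by
  simp only [esymmPoly, Complex.add_im, Complex.im_sum, ← Complex.ofReal_pow, Complex.ofReal_im,
    Complex.im_mul_ofReal, zero_add]

lemma im_esymmPoly_pos (hc : ∀ j ∈ Finset.Icc 2 d, 0 ≤ (c j).im)
    (hc' : ∃ j ∈ Finset.Icc 2 d, 0 < (c j).im) (hτ : 0 < τ) : 0 < (esymmPoly d c τ).im := by
  rw [im_esymmPoly]
  obtain ⟨k, hk, hck⟩ := hc'
  exact Finset.sum_pos' (fun j hj ↦ mul_nonneg (hc j hj) (by positivity)) ⟨k, hk, by positivity⟩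

lemma im_esymmRatio_pos (hτ : 0 < τ) (h : 0 < (esymmPoly d c τ).im) :
    0 < (esymmRatio d c τ).im := by
  rw [esymmRatio, Complex.div_ofReal_im]
  positivity

lemma meromorphic_esymmRatio (d : ℕ) (c : ℕ → ℂ) : Meromorphic (esymmRatio d c) := by
  have h_ofReal : Meromorphic ((↑) : ℝ → ℂ) :=
    fun t ↦ (Complex.ofRealCLM.analyticAt t).meromorphicAt
  unfold esymmRatio esymmPoly
  push_cast
  fun_prop

lemma esymmRatio_sub_one (hd : 1 ≤ d) (hτ : 0 < τ) :
    esymmRatio d c τ - 1 =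
      ∑ j ∈ Finset.Icc 2 d, c j * (τ ^ (d - j) / (τ ^ (d - 1) * (τ + 1)) : ℝ) := by
  have h_ne : ((τ ^ (d - 1) * (τ + 1) : ℝ) : ℂ) ≠ 0 := by
    exact_mod_cast (by positivity : τ ^ (d - 1) * (τ + 1) ≠ 0)
  have h_lead : (τ : ℂ) ^ d + (τ : ℂ) ^ (d - 1) = (τ ^ (d - 1) * (τ + 1) : ℝ) := by
    push_cast
    rw [mul_add, mul_one, pow_sub_one_mul (by omega)]
  rw [esymmRatio, esymmPoly, h_lead, add_div, div_self h_ne, add_sub_cancel_left, Finset.sum_div]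
  simp only [Complex.ofReal_div, Complex.ofReal_pow, mul_div_assoc]

lemma isBigO_esymmRatio_sub_one (hd : 1 ≤ d) (c : ℕ → ℂ) :
    (fun τ ↦ esymmRatio d c τ - 1) =O[atTop] fun τ : ℝ ↦ τ ^ (-2 : ℝ) := by
  have h_term (j : ℕ) (hj : j ∈ Finset.Icc 2 d) :
      (fun τ : ℝ ↦ c j * (τ ^ (d - j) / (τ ^ (d - 1) * (τ + 1)) : ℝ)) =O[atTop]
        fun τ : ℝ ↦ τ ^ (-2 : ℝ) := by
    have hj' := Finset.mem_Icc.1 hj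
    exact (Complex.isBigO_ofReal_left.2
      (isBigO_pow_div_pow_mul_add_one (by omega))).const_mul_left (c j)
  refine (IsBigO.sum h_term).congr' ?_ EventuallyEq.rfl
  filter_upwards [eventually_gt_atTop 0] with τ hτ
  rw [Finset.sum_apply, esymmRatio_sub_one hd hτ]

lemma log_esymmRatio (hd : 1 ≤ d) (hτ : 0 < τ) (h_ne : esymmPoly d c τ ≠ 0) :
    Complex.log (esymmRatio d c τ) =
      Complex.log (esymmPoly d c τ) + (1 - d) * Real.log τ - Real.log (τ + 1) := by
  rw [esymmRatio, log_div_ofReal h_ne (by positivity), Real.log_mul (by positivity) (by positivity),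
    Real.log_pow]
  push_cast [hd]
  ring

lemma esymmPoly_update {k : ℕ} (hk : k ∈ Finset.Icc 2 d) (c : ℕ → ℂ) (z : ℂ) (τ : ℝ) :
    esymmPoly d (update c k z) τ =
      (τ : ℂ) ^ d + (τ : ℂ) ^ (d - 1)
        + (∑ j ∈ (Finset.Icc 2 d).erase k, c j * (τ : ℂ) ^ (d - j)) + z * (τ : ℂ) ^ (d - k) := by
  have h_erase : ∑ j ∈ (Finset.Icc 2 d).erase k, update c k z j * (τ : ℂ) ^ (d - j) =
      ∑ j ∈ (Finset.Icc 2 d).erase k, c j * (τ : ℂ) ^ (d - j) :=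
    Finset.sum_congr rfl fun j hj ↦ by rw [update_of_ne (Finset.ne_of_mem_erase hj)]
  rw [esymmPoly, ← Finset.sum_erase_add _ _ hk, h_erase, update_self, add_assoc _ _ (z * _)]

lemma im_update_ofReal_nonneg {z : ℂ} (hz : 0 ≤ z.im) (e : ℕ → ℝ) (k j : ℕ) :
    0 ≤ (update (fun i ↦ (e i : ℂ)) k z j).im := by
  rcases eq_or_ne j k with rfl | hjk
  · rwa [update_self]
  · rw [update_of_ne hjk, Complex.ofReal_im]

end EsymmPoly

theorem entropy_pick_function_general {d : ℕ} {c : ℕ → ℂ}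
    (hc : ∀ j ∈ Finset.Icc 2 d, 0 ≤ (c j).im) (hc' : ∃ j ∈ Finset.Icc 2 d, 0 < (c j).im) :
    0 < (∫ τ in Ioi (0 : ℝ),
        (Complex.log (esymmPoly d c τ) + (1 - d) * Real.log τ - Real.log (τ + 1))).im := by
  have hd : 1 ≤ d := by
    obtain ⟨j, hj, -⟩ := hc'
    have := Finset.mem_Icc.1 hj
    omega
  have h_im (τ : ℝ) (hτ : 0 < τ) : 0 < (esymmPoly d c τ).im := im_esymmPoly_pos hc hc' hτ
  have h_log : EqOn (fun τ : ℝ ↦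
        Complex.log (esymmPoly d c τ) + (1 - d) * Real.log τ - Real.log (τ + 1))
      (fun τ ↦ Complex.log (esymmRatio d c τ)) (Ioi 0) := fun τ hτ ↦
    (log_esymmRatio hd hτ fun h ↦ (h_im τ hτ).ne' (by rw [h, Complex.zero_im])).symm
  have h_int : IntegrableOn (fun τ ↦ Complex.log (esymmRatio d c τ)) (Ioi 0) :=
    integrableOn_Ioi_log_of_isBigO_rpow (by norm_num) 0 (meromorphic_esymmRatio d c)
      (isBigO_esymmRatio_sub_one hd c)
  rw [setIntegral_congr_fun measurableSet_Ioi h_log]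
  exact im_setIntegral_pos measurableSet_Ioi (by simp) h_int fun τ hτ ↦
    im_log_pos (im_esymmRatio_pos hτ (h_im τ hτ))

/-- **The entropy is a Pick function of each symmetric-polynomial variable.**
For `d ≥ 2`, `2 ≤ k ≤ d`, fixed positive `e_j` (`j ∈ {2,…,d}`, `j ≠ k`), and
`z ∈ ℂ` with `Im z > 0`, the analytic continuation
`Φ(z) = ∫₀^∞ [Log(τ^d + τ^{d−1} + Σ_{j≠k} e_j τ^{d−j} + z τ^{d−k})
  + (1−d) ln τ − ln(τ+1)] dτ` satisfies `Im Φ(z) > 0`. -/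
theorem entropy_pick_function (d k : ℕ) (hd : 2 ≤ d) (hk2 : 2 ≤ k) (hkd : k ≤ d)
    (e : ℕ → ℝ) (he : ∀ j ∈ (Finset.Icc 2 d).erase k, 0 < e j)
    (z : ℂ) (hz : 0 < z.im) :
    0 < (∫ τ in Set.Ioi (0 : ℝ),
        (Complex.log ((τ : ℂ) ^ d + (τ : ℂ) ^ (d - 1)
            + (∑ j ∈ (Finset.Icc 2 d).erase k, (e j : ℂ) * (τ : ℂ) ^ (d - j))
            + z * (τ : ℂ) ^ (d - k))
          + ((1 : ℂ) - (d : ℂ)) * (Real.log τ : ℂ)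
          - (Real.log (τ + 1) : ℂ))).im := by
  have hk : k ∈ Finset.Icc 2 d := Finset.mem_Icc.2 ⟨hk2, hkd⟩
  simpa only [esymmPoly_update hk] using entropy_pick_function_general
    (fun j _ ↦ im_update_ofReal_nonneg hz.le e k j) ⟨k, hk, by rwa [update_self]⟩
end

section
/- Let d ≥ 2 be an integer and let x = (x₁,…,x_d) and y = (y₁,…,y_d) be vectors of pairwise distinct positive reals, each arranged in strictly decreasing order (x₁ > x₂ > ⋯ > x_d and y₁ > y₂ > ⋯ > y_d). Suppose y majorizes x, i.e. Σ_{i=1}^k x_i ≤ Σ_{i=1}^k y_i for every 1 ≤ k ≤ d−1 and Σ_{i=1}^d x_i = Σ_{i=1}^d y_i. Then the subentropy satisfies Q(y₁,…,y_d) ≤ Q(x₁,…,x_d). (That is, Q is Schur concave in the variables x₁,…,x_d.) -/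
open Real Finset

/-!
Write `F_v t` for the subentropy of `v` with each logarithm `log (v i)` replaced by `log (t + v i)`.
Lagrange interpolation of `X ^ d` at the nodes `v i` has error exactly `∏ i, (X - v i)`. Evaluating
it at `-t` shows that `F_v` has derivative `t ^ d / ∏ i, (t + v i) - 1` at `t`, and its coefficient
of degree `d - 1` gives `F_v t = -(∑ i, v i) * log t + o(1)` as `t → ∞`. If `y` majorizes `x`, then
`∏ i, (t + y i) ≤ ∏ i, (t + x i)`, so `F_x - F_y` is antitone on `[0, ∞)`; as it tends to `0`, it is
nonnegative at `0`.
-/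

section Weights

variable {ι F : Type*} [Field F] {s : Finset ι} {v : ι → F}

open Polynomial

lemma degree_X_pow_card_sub_nodal_lt (s : Finset ι) (v : ι → F) :
    (X ^ #s - Lagrange.nodal s v).degree < (#s : WithBot ℕ) := by
  have hdeg : (X ^ #s : F[X]).degree = (Lagrange.nodal s v).degree := by
    rw [Lagrange.degree_nodal, degree_X_pow]
  simpa only [degree_X_pow] using degree_sub_lt_left hdeg (monic_X_pow _).ne_zero
    ((monic_X_pow _).leadingCoeff.trans Lagrange.nodal_monic.leadingCoeff.symm)

lemma eval_X_pow_card_sub_nodal {i : ι} (hi : i ∈ s) :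
    (X ^ #s - Lagrange.nodal s v).eval (v i) = v i ^ #s := by
  rw [eval_sub, eval_X_pow, Lagrange.eval_nodal_at_node hi, sub_zero]

variable [DecidableEq ι]

/-- The coefficient of `log (v i)` in the divided difference of `z ↦ z ^ #s * log z` at the nodes
`v j`, `j ∈ s`. The subentropy is minus this divided difference. -/
def subentropyWeight (s : Finset ι) (v : ι → F) (i : ι) : F :=
  v i ^ #s / ∏ j ∈ s.erase i, (v i - v j)

lemma subentropyWeight_eq_zero {i : ι} (hi : i ∈ s) (hvi : v i = 0) :
    subentropyWeight s v i = 0 := by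
  rw [subentropyWeight, hvi, zero_pow (card_ne_zero_of_mem hi), zero_div]

lemma sum_subentropyWeight (hv : Set.InjOn v s) :
    ∑ i ∈ s, subentropyWeight s v i = ∑ i ∈ s, v i := by
  rcases s.eq_empty_or_nonempty with rfl | hs
  · simp
  calc ∑ i ∈ s, subentropyWeight s v i
      = (X ^ #s - Lagrange.nodal s v).coeff (#s - 1) := by
        rw [Lagrange.coeff_eq_sum hv (degree_X_pow_card_sub_nodal_lt s v)]
        exact sum_congr rfl fun i hi ↦ by rw [eval_X_pow_card_sub_nodal hi, subentropyWeight]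
    _ = ∑ i ∈ s, v i := by
        rw [coeff_sub, coeff_X_pow, if_neg (Nat.sub_one_lt hs.card_ne_zero).ne, Lagrange.nodal_eq,
          prod_X_sub_C_coeff_card_pred s v hs.card_pos, zero_sub, neg_neg]

lemma sum_subentropyWeight_div_sub (hv : Set.InjOn v s) {z : F} (hz : ∀ i ∈ s, z ≠ v i) :
    ∑ i ∈ s, subentropyWeight s v i / (z - v i) = z ^ #s / ∏ i ∈ s, (z - v i) - 1 := by
  have hnodal : (Lagrange.nodal s v).eval z ≠ 0 := Lagrange.eval_nodal_not_at_node hz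
  have hinterp := congrArg (eval z) <| Lagrange.eq_interpolate_of_eval_eq (fun i ↦ v i ^ #s) hv
    (degree_X_pow_card_sub_nodal_lt s v) fun i hi ↦ eval_X_pow_card_sub_nodal hi
  rw [Lagrange.eval_interpolate_not_at_node _ hz, eval_sub, eval_X_pow] at hinterp
  rw [← Lagrange.eval_nodal, div_sub_one hnodal, hinterp, mul_div_cancel_left₀ _ hnodal]
  refine sum_congr rfl fun i _ ↦ ?_
  rw [subentropyWeight, Lagrange.nodalWeight, prod_inv_distrib]
  ring

lemma sum_subentropyWeight_div_add (hv : Set.InjOn v s) {t : F} (ht : ∀ i ∈ s, t + v i ≠ 0) :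
    ∑ i ∈ s, subentropyWeight s v i / (t + v i) = 1 - t ^ #s / ∏ i ∈ s, (t + v i) := by
  have hneg (i : ι) : -t - v i = -(t + v i) := by ring
  have h := sum_subentropyWeight_div_sub hv (z := -t) fun i hi heq ↦
    ht i hi (by rw [← heq, add_neg_cancel])
  simp only [hneg, div_neg, sum_neg_distrib, ← prod_const, ← prod_div_distrib, neg_div,
    neg_neg] at h
  rw [← neg_sub, ← prod_const, ← prod_div_distrib, ← h, neg_neg]

end Weights

section Subentropy

open Filter Topology

variable {ι : Type*} [DecidableEq ι] {s : Finset ι} {v w : ι → ℝ}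

/-- The subentropy of the pairwise distinct nonnegative reals `v i`, `i ∈ s`. A node `v i = 0`
contributes `0`, in accordance with `z ^ #s * log z → 0` as `z → 0`. -/
noncomputable def subentropy (s : Finset ι) (v : ι → ℝ) : ℝ :=
  -∑ i ∈ s, subentropyWeight s v i * log (v i)

/-- The subentropy with its logarithms shifted by `t` and its weights unchanged: a path from the
subentropy at `t = 0` to a quantity that, as `t → ∞`, depends on `∑ i ∈ s, v i` only. -/
noncomputable def shiftedSubentropy (s : Finset ι) (v : ι → ℝ) (t : ℝ) : ℝ :=
  -∑ i ∈ s, subentropyWeight s v i * log (t + v i)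

lemma shiftedSubentropy_zero (s : Finset ι) (v : ι → ℝ) :
    shiftedSubentropy s v 0 = subentropy s v := by
  simp only [shiftedSubentropy, subentropy, zero_add]

lemma hasDerivAt_shiftedSubentropy (hv : Set.InjOn v s) {t : ℝ} (ht : ∀ i ∈ s, t + v i ≠ 0) :
    HasDerivAt (shiftedSubentropy s v) (t ^ #s / ∏ i ∈ s, (t + v i) - 1) t := by
  rw [← neg_sub, ← sum_subentropyWeight_div_add hv ht]
  refine (HasDerivAt.fun_sum fun i hi ↦ ?_).fun_neg
  simpa only [mul_one_div] using
    (((hasDerivAt_id' t).add_const (v i)).log (ht i hi)).const_mul (subentropyWeight s v i)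

lemma continuousOn_shiftedSubentropy (hv : ∀ i ∈ s, 0 ≤ v i) :
    ContinuousOn (shiftedSubentropy s v) (Set.Ici 0) := by
  refine (continuousOn_finsetSum s fun i hi ↦ ?_).neg
  rcases (hv i hi).eq_or_lt with hvi | hvi
  · simp only [subentropyWeight_eq_zero hi hvi.symm, zero_mul, continuousOn_const]
  · refine continuousOn_const.mul (ContinuousOn.log (by fun_prop) fun t ht ↦ ?_)
    exact (add_pos_of_nonneg_of_pos ht hvi).ne'

lemma tendsto_shiftedSubentropy_add_mul_log (hv : Set.InjOn v s) :
    Tendsto (fun t ↦ shiftedSubentropy s v t + (∑ i ∈ s, v i) * log t) atTop (𝓝 0) := by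
  have hterms : Tendsto (fun t ↦ -∑ i ∈ s, subentropyWeight s v i * (log (t + v i) - log t)) atTop
      (𝓝 (-∑ i ∈ s, subentropyWeight s v i * 0)) :=
    (tendsto_finsetSum s fun i _ ↦ (tendsto_log_comp_add_sub_log (v i)).const_mul _).neg
  simp only [mul_zero, sum_const_zero, neg_zero] at hterms
  refine hterms.congr fun t ↦ ?_
  simp only [shiftedSubentropy, mul_sub, sum_sub_distrib, ← sum_mul, sum_subentropyWeight hv]
  ring

lemma antitoneOn_shiftedSubentropy_sub (hv : Set.InjOn v s) (hw : Set.InjOn w s)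
    (hv₀ : ∀ i ∈ s, 0 ≤ v i) (hw₀ : ∀ i ∈ s, 0 ≤ w i)
    (hprod : ∀ t > 0, ∏ i ∈ s, (t + w i) ≤ ∏ i ∈ s, (t + v i)) :
    AntitoneOn (fun t ↦ shiftedSubentropy s v t - shiftedSubentropy s w t) (Set.Ici 0) := by
  have hderiv (t : ℝ) (ht : 0 < t) :
      HasDerivAt (fun t ↦ shiftedSubentropy s v t - shiftedSubentropy s w t)
        (t ^ #s / ∏ i ∈ s, (t + v i) - 1 - (t ^ #s / ∏ i ∈ s, (t + w i) - 1)) t :=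
    (hasDerivAt_shiftedSubentropy hv fun i hi ↦
      (add_pos_of_pos_of_nonneg ht (hv₀ i hi)).ne').fun_sub
    (hasDerivAt_shiftedSubentropy hw fun i hi ↦ (add_pos_of_pos_of_nonneg ht (hw₀ i hi)).ne')
  refine antitoneOn_of_deriv_nonpos (convex_Ici 0)
    ((continuousOn_shiftedSubentropy hv₀).sub (continuousOn_shiftedSubentropy hw₀)) ?_ ?_ <;>
    rw [interior_Ici]
  · exact fun t ht ↦ (hderiv t ht).differentiableAt.differentiableWithinAt
  · intro t (ht : 0 < t)
    rw [(hderiv t ht).deriv, sub_sub_sub_cancel_right, sub_nonpos]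
    exact div_le_div_of_nonneg_left (pow_nonneg ht.le _)
      (prod_pos fun i hi ↦ add_pos_of_pos_of_nonneg ht (hw₀ i hi)) (hprod t ht)

theorem subentropy_le_of_prod_add_le (hv : Set.InjOn v s) (hw : Set.InjOn w s)
    (hv₀ : ∀ i ∈ s, 0 ≤ v i) (hw₀ : ∀ i ∈ s, 0 ≤ w i) (hsum : ∑ i ∈ s, v i = ∑ i ∈ s, w i)
    (hprod : ∀ t > 0, ∏ i ∈ s, (t + w i) ≤ ∏ i ∈ s, (t + v i)) :
    subentropy s w ≤ subentropy s v := by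
  have hlim : Tendsto (fun t ↦ shiftedSubentropy s v t - shiftedSubentropy s w t)
      atTop (𝓝 0) := by
    simpa only [hsum, add_sub_add_right_eq_sub, sub_zero] using
      (tendsto_shiftedSubentropy_add_mul_log hv).sub (tendsto_shiftedSubentropy_add_mul_log hw)
  have hanti := antitoneOn_shiftedSubentropy_sub hv hw hv₀ hw₀ hprod
  rw [← sub_nonneg, ← shiftedSubentropy_zero, ← shiftedSubentropy_zero]
  exact le_of_tendsto hlim <| (eventually_ge_atTop 0).mono fun t ht ↦
    hanti Set.self_mem_Ici ht ht

end Subentropy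

section Majorization

lemma sum_range_mul_le_of_monotoneOn {R : Type*} [CommRing R] [PartialOrder R] [IsOrderedRing R]
    {n : ℕ} {f g : ℕ → R} (hf : MonotoneOn f (range n)) (hg : ∀ k < n, 0 ≤ ∑ i ∈ range k, g i) :
    ∑ i ∈ range n, f i * g i ≤ f (n - 1) * ∑ i ∈ range n, g i := by
  have hparts := sum_range_by_parts f g n
  simp only [smul_eq_mul] at hparts
  rw [hparts]
  refine sub_le_self _ (sum_nonneg fun i hi ↦ ?_)
  have hi' : i + 1 < n := Nat.add_lt_of_lt_sub (mem_range.1 hi)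
  have hfi : f i ≤ f (i + 1) :=
    hf (mem_coe.2 (mem_range.2 (by lia))) (mem_coe.2 (mem_range.2 hi')) i.le_succ
  exact mul_nonneg (sub_nonneg.2 hfi) (hg (i + 1) hi')

lemma prod_range_le_prod_range_of_majorized {n : ℕ} {a b : ℕ → ℝ} (ha : ∀ i < n, 0 < a i)
    (hb : ∀ i < n, 0 ≤ b i) (hanti : AntitoneOn a (range n))
    (hmaj : ∀ k < n, ∑ i ∈ range k, a i ≤ ∑ i ∈ range k, b i)
    (hsum : ∑ i ∈ range n, a i = ∑ i ∈ range n, b i) :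
    ∏ i ∈ range n, b i ≤ ∏ i ∈ range n, a i := by
  have hinv : MonotoneOn (fun i ↦ (a i)⁻¹) (range n) := fun i hi j hj hij ↦
    inv_anti₀ (ha j (mem_range.1 hj)) (hanti hi hj hij)
  have habel : ∑ i ∈ range n, (a i)⁻¹ * (b i - a i) ≤ 0 := by
    simpa only [sum_sub_distrib, hsum, sub_self, mul_zero] using
      sum_range_mul_le_of_monotoneOn hinv (g := fun i ↦ b i - a i) fun k hk ↦ by
        rw [sum_sub_distrib]
        exact sub_nonneg.2 (hmaj k hk)
  have htangent (i : ℕ) (hi : i < n) : b i / a i ≤ exp ((a i)⁻¹ * (b i - a i)) := by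
    rw [← div_eq_inv_mul, sub_div, div_self (ha i hi).ne']
    simpa only [sub_add_cancel] using add_one_le_exp (b i / a i - 1)
  rw [← div_le_one (prod_pos fun i hi ↦ ha i (mem_range.1 hi)), ← prod_div_distrib]
  calc ∏ i ∈ range n, b i / a i
      ≤ ∏ i ∈ range n, exp ((a i)⁻¹ * (b i - a i)) :=
        prod_le_prod (fun i hi ↦ div_nonneg (hb i (mem_range.1 hi)) (ha i (mem_range.1 hi)).le)
          fun i hi ↦ htangent i (mem_range.1 hi)
    _ = exp (∑ i ∈ range n, (a i)⁻¹ * (b i - a i)) := (exp_sum _ _).symm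
    _ ≤ 1 := exp_le_one_iff.2 habel

end Majorization

theorem subentropy_schur_concave_general {d : ℕ} {x y : ℕ → ℝ} (hx : ∀ i < d, 0 ≤ x i)
    (hy : ∀ i < d, 0 ≤ y i) (hxanti : StrictAntiOn x (range d)) (hyinj : Set.InjOn y (range d))
    (hmaj : ∀ k < d, ∑ i ∈ range k, x i ≤ ∑ i ∈ range k, y i)
    (hsum : ∑ i ∈ range d, x i = ∑ i ∈ range d, y i) :
    subentropy (range d) y ≤ subentropy (range d) x := by
  refine subentropy_le_of_prod_add_le hxanti.injOn hyinj (fun i hi ↦ hx i (mem_range.1 hi))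
    (fun i hi ↦ hy i (mem_range.1 hi)) hsum fun t ht ↦ ?_
  refine prod_range_le_prod_range_of_majorized (fun i hi ↦ add_pos_of_pos_of_nonneg ht (hx i hi))
    (fun i hi ↦ add_nonneg ht.le (hy i hi)) (hxanti.antitoneOn.const_add t) (fun k hk ↦ ?_) ?_
  · simpa only [sum_add_distrib, add_le_add_iff_left] using hmaj k hk
  · rw [sum_add_distrib, sum_add_distrib, hsum]

/-- **Schur concavity of the subentropy.**
Let `d ≥ 2` and let `x₀ > x₁ > ⋯ > x_{d−1} > 0` and `y₀ > y₁ > ⋯ > y_{d−1} > 0`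
(indexed over `range d`). If `y` majorizes `x`, i.e. all partial sums of `y`
dominate those of `x` and the total sums agree, then `Q(y) ≤ Q(x)`, where
`Q(x) = −Σᵢ (xᵢ^d / ∏_{j≠i}(xᵢ−xⱼ)) ln xᵢ`. -/
theorem subentropy_schur_concave (d : ℕ) (hd : 2 ≤ d) (x y : ℕ → ℝ)
    (hx : ∀ i < d, 0 < x i) (hy : ∀ i < d, 0 < y i)
    (hxdec : ∀ i j, i < j → j < d → x j < x i)
    (hydec : ∀ i j, i < j → j < d → y j < y i)
    (hmaj : ∀ k, 1 ≤ k → k ≤ d - 1 →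
      ∑ i ∈ Finset.range k, x i ≤ ∑ i ∈ Finset.range k, y i)
    (hsum : ∑ i ∈ Finset.range d, x i = ∑ i ∈ Finset.range d, y i) :
    (-∑ i ∈ Finset.range d,
        (y i ^ d / ∏ j ∈ (Finset.range d).erase i, (y i - y j)) * Real.log (y i)) ≤
      -∑ i ∈ Finset.range d,
        (x i ^ d / ∏ j ∈ (Finset.range d).erase i, (x i - x j)) * Real.log (x i) := by
  have hxanti : StrictAntiOn x (range d) := fun i _ j hj hij ↦ hxdec i j hij (mem_range.1 hj)
  have hyanti : StrictAntiOn y (range d) := fun i _ j hj hij ↦ hydec i j hij (mem_range.1 hj)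
  have hmaj' (k : ℕ) (hk : k < d) : ∑ i ∈ range k, x i ≤ ∑ i ∈ range k, y i := by
    rcases k.eq_zero_or_pos with rfl | hk'
    · rfl
    · exact hmaj k hk' (Nat.le_sub_one_of_lt hk)
  simpa only [subentropy, subentropyWeight, card_range] using subentropy_schur_concave_general
    (fun i hi ↦ (hx i hi).le) (fun i hi ↦ (hy i hi).le) hxanti hyanti.injOn hmaj' hsum
end

section
/- Let d ≥ 2 be an integer and let x₁,…,x_d be nonnegative real numbers with elementary symmetric polynomials e₁,…,e_d (so e₁ = Σ x_i and e₂ = Σ_{i<j} x_i x_j). Define a = ( (d−1)e₁ − √( (d−1)²e₁² − 2e₂·d(d−1) ) ) / ( d(d−1) ) and b = e₁ − (d−1)a (the discriminant (d−1)²e₁² − 2d(d−1)e₂ is nonnegative for any nonnegative x_i). Let f_k denote the k-th elementary symmetric polynomial of the d-tuple (a, a, …, a, b) in which a is repeated d−1 times, i.e. f_k = binom(d−1,k)·a^k + binom(d−1,k−1)·a^{k−1}·b. Then f₁ = e₁, f₂ = e₂, and f_k ≥ e_k for every 1 ≤ k ≤ d. -/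
open Real Finset

/-!
Fix `e₁` and `e₂`. If a multiset contains three entries `x < y ≤ z`, replace them by `u, u, v`,
where `u ∈ (x, y)` is a critical point of `p(t) = (t - x)(t - y)(t - z)` and `v = x + y + z - 2u`.
Since `p(t) - p(u) = (t - u)²(t - v)`, this keeps the sum and the pairwise sum of the triple and
raises its product by `p(u) > 0`; hence it keeps `e₁` and `e₂`, strictly increases `e₃`, and
decreases no `e_k`. By compactness some multiset maximizes `e₃` among those with the same `e₁`, `e₂`
and with every `e_k` at least the original one. It admits no such replacement, so all its entries
but the largest coincide, and `e₁`, `e₂` then determine it.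
-/

section Esymm

variable {R : Type*}

theorem esymm_zero [CommSemiring R] (s : Multiset R) : s.esymm 0 = 1 := by
  simp [Multiset.esymm]

theorem esymm_cons_succ [CommSemiring R] (x : R) (s : Multiset R) (k : ℕ) :
    (x ::ₘ s).esymm (k + 1) = s.esymm (k + 1) + x * s.esymm k := by
  simp [Multiset.esymm, Multiset.powersetCard_cons, Multiset.sum_map_mul_left]

theorem esymm_replicate [CommSemiring R] (n k : ℕ) (a : R) :
    (Multiset.replicate n a).esymm k = n.choose k * a ^ k := by
  induction n generalizing k with
  | zero => cases k <;> simp [Multiset.esymm, Multiset.powersetCard_zero_right]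
  | succ n ih =>
    cases k with
    | zero => simp [esymm_zero]
    | succ k =>
      rw [Multiset.replicate_succ, esymm_cons_succ, ih, ih, Nat.choose_succ_succ]
      push_cast
      ring

theorem esymm_nonneg [CommSemiring R] [PartialOrder R] [IsOrderedRing R] {s : Multiset R}
    (hs : ∀ x ∈ s, 0 ≤ x) (k : ℕ) : 0 ≤ s.esymm k := by
  refine Multiset.sum_nonneg fun p hp ↦ ?_
  obtain ⟨t, ht, rfl⟩ := Multiset.mem_map.1 hp
  exact Multiset.prod_nonneg fun x hx ↦
    hs x (Multiset.mem_of_le (Multiset.mem_powersetCard.1 ht).1 hx)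

theorem continuous_esymm_map [CommSemiring R] [TopologicalSpace R] [IsTopologicalSemiring R]
    {ι : Type*} [Fintype ι] (k : ℕ) :
    Continuous fun y : ι → R ↦ (univ.val.map y).esymm k := by
  simp only [esymm_map_val]
  fun_prop

theorem esymm_replace_triple [CommRing R] {x y z x' y' z' : R} (r : Multiset R)
    (hsum : x' + y' + z' = x + y + z)
    (hpair : x' * y' + x' * z' + y' * z' = x * y + x * z + y * z) (k : ℕ) :
    (x' ::ₘ y' ::ₘ z' ::ₘ r).esymm (k + 3) =
      (x ::ₘ y ::ₘ z ::ₘ r).esymm (k + 3) + (x' * y' * z' - x * y * z) * r.esymm k := by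
  simp only [esymm_cons_succ]
  linear_combination r.esymm (k + 2) * hsum + r.esymm (k + 1) * hpair

end Esymm

theorem exists_fin_map_eq {α : Type*} {s : Multiset α} {n : ℕ} (hs : s.card = n) :
    ∃ y : Fin n → α, univ.val.map y = s := by
  induction s using Quot.inductionOn with
  | h l =>
    subst hs
    exact ⟨l.get, (Fin.univ_val_map l.get).trans (congrArg _ (List.ofFn_get l))⟩

theorem exists_double_entry_of_lt_of_le {x y z : ℝ} (hxy : x < y) (hyz : y ≤ z) :
    ∃ u v : ℝ, x < u ∧ x < v ∧ u + u + v = x + y + z ∧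
      u * u + u * v + u * v = x * y + x * z + y * z ∧ x * y * z < u * u * v := by
  obtain ⟨u, ⟨hxu, huy⟩, hcrit⟩ := exists_hasDerivAt_eq_zero
    (f := fun t ↦ (t - x) * (t - y) * (t - z)) hxy (by fun_prop) (by simp)
    fun t _ ↦ (((hasDerivAt_id t).sub_const x).mul ((hasDerivAt_id t).sub_const y)).mul
      ((hasDerivAt_id t).sub_const z)
  simp only [Pi.mul_apply, id_eq, one_mul, mul_one] at hcrit
  have hpos : 0 < (u - x) * ((y - u) * (z - u)) :=
    mul_pos (by linarith) (mul_pos (by linarith) (by linarith))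
  refine ⟨u, x + y + z - 2 * u, hxu, by linarith, by ring, by linear_combination -hcrit, ?_⟩
  have hgain : u * u * (x + y + z - 2 * u) - x * y * z = (u - x) * ((y - u) * (z - u)) := by
    linear_combination -u * hcrit
  linarith

/-- `IsEsymmImprovement s t`: the multiset `t` of nonnegative reals is a competitor of `s` in the
extremal problem, with the same number of entries, the same `e₁` and `e₂`, and no `e_k` smaller
than that of `s`. -/
structure IsEsymmImprovement (s t : Multiset ℝ) : Prop where
  nonneg : ∀ x ∈ t, 0 ≤ x
  card_eq : t.card = s.card
  esymm_one : t.esymm 1 = s.esymm 1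
  esymm_two : t.esymm 2 = s.esymm 2
  esymm_le : ∀ k, s.esymm k ≤ t.esymm k

namespace IsEsymmImprovement

variable {s t w : Multiset ℝ}

theorem refl (hs : ∀ x ∈ s, 0 ≤ x) : IsEsymmImprovement s s :=
  ⟨hs, rfl, rfl, rfl, fun _ ↦ le_rfl⟩

theorem trans (hst : IsEsymmImprovement s t) (htw : IsEsymmImprovement t w) :
    IsEsymmImprovement s w where
  nonneg := htw.nonneg
  card_eq := htw.card_eq.trans hst.card_eq
  esymm_one := htw.esymm_one.trans hst.esymm_one
  esymm_two := htw.esymm_two.trans hst.esymm_two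
  esymm_le k := (hst.esymm_le k).trans (htw.esymm_le k)

theorem replace_triple {x y z x' y' z' : ℝ} {r : Multiset ℝ}
    (hnonneg : ∀ c ∈ x' ::ₘ y' ::ₘ z' ::ₘ r, 0 ≤ c) (hsum : x' + y' + z' = x + y + z)
    (hpair : x' * y' + x' * z' + y' * z' = x * y + x * z + y * z)
    (hprod : x * y * z ≤ x' * y' * z') :
    IsEsymmImprovement (x ::ₘ y ::ₘ z ::ₘ r) (x' ::ₘ y' ::ₘ z' ::ₘ r) := by
  have hone : (x' ::ₘ y' ::ₘ z' ::ₘ r).esymm 1 = (x ::ₘ y ::ₘ z ::ₘ r).esymm 1 := by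
    simp only [esymm_cons_succ, esymm_zero]
    linear_combination hsum
  have htwo : (x' ::ₘ y' ::ₘ z' ::ₘ r).esymm 2 = (x ::ₘ y ::ₘ z ::ₘ r).esymm 2 := by
    simp only [esymm_cons_succ, esymm_zero]
    linear_combination r.esymm 1 * hsum + hpair
  refine ⟨hnonneg, by simp, hone, htwo, fun k ↦ ?_⟩
  match k with
  | 0 => simp only [esymm_zero, le_refl]
  | 1 => exact hone.ge
  | 2 => exact htwo.ge
  | k + 3 =>
    have hr : 0 ≤ r.esymm k := esymm_nonneg (fun c hc ↦ hnonneg c (by simp [hc])) k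
    rw [esymm_replace_triple r hsum hpair]
    exact le_add_of_nonneg_right (mul_nonneg (sub_nonneg.2 hprod) hr)

theorem exists_esymm_three_lt {x y z : ℝ} {r : Multiset ℝ}
    (hnonneg : ∀ c ∈ x ::ₘ y ::ₘ z ::ₘ r, 0 ≤ c) (hxy : x < y) (hyz : y ≤ z) :
    ∃ t, IsEsymmImprovement (x ::ₘ y ::ₘ z ::ₘ r) t ∧
      (x ::ₘ y ::ₘ z ::ₘ r).esymm 3 < t.esymm 3 := by
  obtain ⟨u, v, hxu, hxv, hsum, hpair, hprod⟩ := exists_double_entry_of_lt_of_le hxy hyz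
  have hx : 0 ≤ x := hnonneg x (by simp)
  have hr : ∀ c ∈ r, 0 ≤ c := fun c hc ↦ hnonneg c (by simp [hc])
  refine ⟨u ::ₘ u ::ₘ v ::ₘ r, replace_triple ?_ hsum hpair hprod.le, ?_⟩
  · simpa only [Multiset.forall_mem_cons] using
      ⟨hx.trans hxu.le, hx.trans hxu.le, hx.trans hxv.le, hr⟩
  · rw [esymm_replace_triple r hsum hpair 0, esymm_zero]
    linarith

theorem isCompact_setOf_map {ι : Type*} [Fintype ι] (s : Multiset ℝ) :
    IsCompact {y : ι → ℝ | IsEsymmImprovement s (univ.val.map y)} := by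
  refine (isCompact_Icc (a := 0) (b := fun _ ↦ s.esymm 1)).of_isClosed_subset ?_ fun y hy ↦ ?_
  · have hsplit : {y : ι → ℝ | IsEsymmImprovement s (univ.val.map y)} =
        {y | (∀ i, 0 ≤ y i) ∧ (univ.val.map y).card = s.card ∧
          (univ.val.map y).esymm 1 = s.esymm 1 ∧ (univ.val.map y).esymm 2 = s.esymm 2 ∧
          ∀ k, s.esymm k ≤ (univ.val.map y).esymm k} := by
      ext y
      exact ⟨fun ⟨h₀, hcard, h₁, h₂, hle⟩ ↦ ⟨by simpa using h₀, hcard, h₁, h₂, hle⟩,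
        fun ⟨h₀, hcard, h₁, h₂, hle⟩ ↦ ⟨by simpa using h₀, hcard, h₁, h₂, hle⟩⟩
    simp only [hsplit, Multiset.card_map, Set.ofPred_and, Set.ofPred_forall]
    exact (isClosed_iInter fun i ↦ isClosed_le continuous_const (continuous_apply i)).inter <|
      isClosed_const.inter <|
      (isClosed_eq (continuous_esymm_map 1) continuous_const).inter <|
      (isClosed_eq (continuous_esymm_map 2) continuous_const).inter <|
      isClosed_iInter fun k ↦ isClosed_le continuous_const (continuous_esymm_map k)
  · have hy₀ : ∀ i, 0 ≤ y i := fun i ↦ hy.nonneg _ (Multiset.mem_map_of_mem y (mem_univ i))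
    have hsum : ∑ i, y i = s.esymm 1 := by
      rw [← hy.esymm_one, esymm_map_val, powersetCard_one]
      simp
    exact ⟨hy₀, fun i ↦ hsum ▸ single_le_sum (fun j _ ↦ hy₀ j) (mem_univ i)⟩

theorem exists_maximal_esymm_three (hs : ∀ x ∈ s, 0 ≤ x) :
    ∃ t, IsEsymmImprovement s t ∧ ∀ w, IsEsymmImprovement s w → w.esymm 3 ≤ t.esymm 3 := by
  obtain ⟨x, hx⟩ := exists_fin_map_eq (rfl : s.card = s.card)
  obtain ⟨y, hy, hmax⟩ := (isCompact_setOf_map (ι := Fin s.card) s).exists_isMaxOn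
    ⟨x, show IsEsymmImprovement s (univ.val.map x) by rw [hx]; exact refl hs⟩
    (continuous_esymm_map 3).continuousOn
  refine ⟨univ.val.map y, hy, fun w hw ↦ ?_⟩
  obtain ⟨y', rfl⟩ := exists_fin_map_eq hw.card_eq
  exact hmax hw

end IsEsymmImprovement

/-- The canonical set `(a, …, a, b)` of the extremal problem as a multiset; here `n` counts the
copies of `a`, so that `d = n + 1`. -/
def canonicalMultiset {α : Type*} (n : ℕ) (a b : α) : Multiset α :=
  b ::ₘ Multiset.replicate n a

theorem esymm_canonicalMultiset_succ {R : Type*} [CommSemiring R] (n k : ℕ) (a b : R) :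
    (canonicalMultiset n a b).esymm (k + 1) =
      n.choose (k + 1) * a ^ (k + 1) + n.choose k * a ^ k * b := by
  rw [canonicalMultiset, esymm_cons_succ, esymm_replicate, esymm_replicate, mul_comm b]

theorem exists_eq_canonicalMultiset {α : Type*} [LinearOrder α] {n : ℕ} {s : Multiset α}
    (hcard : s.card = n + 1)
    (hs : ∀ x y z r, s = x ::ₘ y ::ₘ z ::ₘ r → y ≤ z → y ≤ x) :
    ∃ a b, a ≤ b ∧ s = canonicalMultiset n a b := by
  have hne : s.toFinset.Nonempty :=
    Multiset.toFinset_nonempty.2 (Multiset.card_pos.1 (hcard ▸ n.succ_pos))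
  obtain ⟨b, hb, hmax⟩ := s.toFinset.exists_max_image id hne
  simp only [Multiset.mem_toFinset, id_eq] at hb hmax
  obtain ⟨r, rfl⟩ := Multiset.exists_cons_of_mem hb
  have hr : r.card = n := by simpa only [Multiset.card_cons, Nat.add_right_cancel_iff] using hcard
  rcases r.empty_or_exists_mem with rfl | ⟨a, ha⟩
  · obtain rfl : 0 = n := hr
    exact ⟨b, b, le_rfl, rfl⟩
  refine ⟨a, b, hmax a (Multiset.mem_cons_of_mem ha),
    congrArg (b ::ₘ ·) (Multiset.eq_replicate.2 ⟨hr, fun c hc ↦ ?_⟩)⟩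
  obtain ⟨r, rfl⟩ := Multiset.exists_cons_of_mem ha
  rcases Multiset.mem_cons.1 hc with rfl | hc
  · rfl
  obtain ⟨r, rfl⟩ := Multiset.exists_cons_of_mem hc
  have hswap : b ::ₘ a ::ₘ c ::ₘ r = a ::ₘ c ::ₘ b ::ₘ r := by
    rw [Multiset.cons_swap b a, Multiset.cons_swap b c]
  exact le_antisymm (hs a c b r hswap (hmax c (by simp)))
    (hs c a b r (hswap.trans (Multiset.cons_swap a c _)) (hmax a (by simp)))

theorem exists_isEsymmImprovement_canonicalMultiset {n : ℕ} {s : Multiset ℝ}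
    (hs : ∀ x ∈ s, 0 ≤ x) (hcard : s.card = n + 1) :
    ∃ a b, a ≤ b ∧ IsEsymmImprovement s (canonicalMultiset n a b) := by
  obtain ⟨t, hst, hmax⟩ := IsEsymmImprovement.exists_maximal_esymm_three hs
  have hnoreplace : ∀ x y z r, t = x ::ₘ y ::ₘ z ::ₘ r → y ≤ z → y ≤ x := by
    rintro x y z r rfl hyz
    by_contra! hxy
    obtain ⟨w, htw, hlt⟩ := IsEsymmImprovement.exists_esymm_three_lt hst.nonneg hxy hyz
    exact (hmax w (hst.trans htw)).not_gt hlt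
  obtain ⟨a, b, hab, rfl⟩ := exists_eq_canonicalMultiset (hst.card_eq.trans hcard) hnoreplace
  exact ⟨a, b, hab, hst⟩

theorem canonicalMultiset_repeated_entry_eq {n : ℕ} (hn : n ≠ 0) {a b : ℝ} (hab : a ≤ b) :
    a = (n * (canonicalMultiset n a b).esymm 1
      - √(n ^ 2 * (canonicalMultiset n a b).esymm 1 ^ 2
        - 2 * (canonicalMultiset n a b).esymm 2 * (n + 1) * n)) / ((n + 1) * n) := by
  have hone : (canonicalMultiset n a b).esymm 1 = n * a + b := by
    simp [esymm_canonicalMultiset_succ]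
  have htwo : (canonicalMultiset n a b).esymm 2 = n * (n - 1) / 2 * a ^ 2 + n * a * b := by
    simp [esymm_canonicalMultiset_succ, Nat.cast_choose_two]
  have hdiscr : (n : ℝ) ^ 2 * (n * a + b) ^ 2
      - 2 * (n * (n - 1) / 2 * a ^ 2 + n * a * b) * (n + 1) * n = (n * (b - a)) ^ 2 := by
    ring
  rw [hone, htwo, hdiscr, sqrt_sq (mul_nonneg n.cast_nonneg (sub_nonneg.2 hab))]
  field_simp
  ring

/-- **Maximality of the canonical set `(a, …, a, b)`.**
For `d ≥ 2` and nonnegative reals `x₁, …, x_d` with elementary symmetric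
polynomials `e_k`, let `a = ((d−1)e₁ − √((d−1)²e₁² − 2e₂d(d−1)))/(d(d−1))`
and `b = e₁ − (d−1)a`, and let
`f_k = C(d−1,k) a^k + C(d−1,k−1) a^{k−1} b` be the elementary symmetric
polynomials of `(a, …, a, b)` (`a` repeated `d−1` times). Then `f₁ = e₁`,
`f₂ = e₂`, and `f_k ≥ e_k` for all `1 ≤ k ≤ d`. -/
theorem canonical_set_maximizes_esymm (d : ℕ) (hd : 2 ≤ d) (x : Fin d → ℝ)
    (hx : ∀ i, 0 ≤ x i)
    (e : ℕ → ℝ)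
    (he : ∀ k, e k = ∑ t ∈ Finset.powersetCard k (Finset.univ : Finset (Fin d)),
      ∏ i ∈ t, x i)
    (a b : ℝ)
    (ha : a = (((d : ℝ) - 1) * e 1
      - Real.sqrt (((d : ℝ) - 1) ^ 2 * (e 1) ^ 2 - 2 * e 2 * d * ((d : ℝ) - 1)))
        / ((d : ℝ) * ((d : ℝ) - 1)))
    (hb : b = e 1 - ((d : ℝ) - 1) * a)
    (f : ℕ → ℝ)
    (hf : ∀ k, f k = ((d - 1).choose k : ℝ) * a ^ k
      + ((d - 1).choose (k - 1) : ℝ) * a ^ (k - 1) * b) :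
    f 1 = e 1 ∧ f 2 = e 2 ∧ ∀ k, 1 ≤ k → k ≤ d → e k ≤ f k := by
  obtain ⟨n, rfl⟩ : ∃ n, d = n + 1 := ⟨d - 1, by omega⟩
  have hesymm : ∀ k, e k = (univ.val.map x).esymm k := fun k ↦ by rw [he, esymm_map_val]
  obtain ⟨a', b', hab, himp⟩ := exists_isEsymmImprovement_canonicalMultiset
    (Multiset.forall_mem_map_iff.2 fun i (_ : i ∈ univ.val) ↦ hx i)
    ((Multiset.card_map x _).trans (card_fin (n + 1)))
  have hone : (canonicalMultiset n a' b').esymm 1 = e 1 := himp.esymm_one.trans (hesymm 1).symm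
  have htwo : (canonicalMultiset n a' b').esymm 2 = e 2 := himp.esymm_two.trans (hesymm 2).symm
  obtain rfl : a' = a := by
    rw [canonicalMultiset_repeated_entry_eq (n := n) (by omega) hab, hone, htwo, ha]
    push_cast
    simp only [add_sub_cancel_right]
  obtain rfl : b' = b := by
    rw [hb, ← hone, esymm_canonicalMultiset_succ]
    simp
  have hcanonical : ∀ k, 1 ≤ k → f k = (canonicalMultiset n a' b').esymm k := by
    rintro (_ | k) hk
    · omega
    · rw [hf, esymm_canonicalMultiset_succ, Nat.add_sub_cancel, Nat.add_sub_cancel]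
  refine ⟨(hcanonical 1 le_rfl).trans hone, (hcanonical 2 one_le_two).trans htwo, fun k hk _ ↦ ?_⟩
  rw [hcanonical k hk, hesymm]
  exact himp.esymm_le k
end

section
/- Let d ≥ 2 be an integer and let x₁,…,x_d be positive real numbers with elementary symmetric polynomials e₁ = Σ x_i and e₂ = Σ_{i<j} x_i x_j, and suppose e₂ > 0. Define a = ( (d−1)e₁ − √( (d−1)²e₁² − 2e₂·d(d−1) ) ) / ( d(d−1) ) and b = e₁ − (d−1)a; then a, b > 0. The entropy satisfies the upper bound H(x₁,…,x_d) ≤ −(d−1)·a·ln a − b·ln b. Moreover this bound is attained when (x₁,…,x_d) = (a,…,a,b) with a repeated d−1 times, so it is the tightest upper bound on H depending only on e₁ and e₂. -/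
open Real Finset
open AffineMap (lineMap)

/-!
Subtracting from a function `f` its tangent line at `a` does not affect the comparison of
`∑ i, f (x i)` with `(d - 1) * f a + f b`, since the two tuples `x` and `(a, …, a, b)` have the
same sum; so assume `f' a = 0`. When `f'` is concave, `(f t - f a) / (t - a) ^ 2` decreases in `t`.
Equality of the first two power sums means that `∑ i, (x i - a) ^ 2 = (b - a) ^ 2`, which forces
`x i ≤ b`, hence `f (x i) - f a ≥ ((x i - a) / (b - a)) ^ 2 * (f b - f a)`, and summing over `i`
gives `∑ i, (f (x i) - f a) ≥ f b - f a`. The entropy is the case `f t = t * log t`.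
-/

section SymmetricFunctions

variable {ι R : Type*} [Fintype ι] [CommRing R]

theorem two_mul_sum_powersetCard_two_prod (x : ι → R) :
    2 * ∑ t ∈ powersetCard 2 univ, ∏ i ∈ t, x i = (∑ i, x i) ^ 2 - ∑ i, x i ^ 2 := by
  have newton := congrArg (MvPolynomial.aeval x) (MvPolynomial.mul_esymm_eq_sum ι R 2)
  have indices : {p ∈ antidiagonal 2 | p.1 < 2} = {(0, 2), (1, 1)} := by decide
  rw [indices, sum_pair (by decide)] at newton
  simp only [MvPolynomial.esymm, MvPolynomial.psum, powersetCard_one, powersetCard_zero, sum_map,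
    map_mul, map_sum, map_prod, map_pow, map_add, map_neg, map_one, Nat.cast_ofNat, map_ofNat,
    MvPolynomial.aeval_X, sum_singleton, prod_empty, Function.Embedding.coeFn_mk,
    prod_singleton, pow_one] at newton
  linear_combination newton

variable [LinearOrder R] [IsStrictOrderedRing R]

theorem two_mul_card_mul_sum_powersetCard_two_prod_le (x : ι → R) :
    2 * Fintype.card ι * ∑ t ∈ powersetCard 2 univ, ∏ i ∈ t, x i
      ≤ (Fintype.card ι - 1) * (∑ i, x i) ^ 2 := by
  have cauchy_schwarz : (∑ i, x i) ^ 2 ≤ Fintype.card ι * ∑ i, x i ^ 2 := sq_sum_le_card_mul_sum_sq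
  linear_combination cauchy_schwarz + Fintype.card ι * two_mul_sum_powersetCard_two_prod x

theorem sum_pos_of_sum_powersetCard_two_prod_pos {x : ι → R} (hx : ∀ i, 0 ≤ x i)
    (h : 0 < ∑ t ∈ powersetCard 2 univ, ∏ i ∈ t, x i) : 0 < ∑ i, x i := by
  have sum_sq_nonneg : 0 ≤ ∑ i, x i ^ 2 := sum_nonneg fun i _ => sq_nonneg (x i)
  have sq_sum_pos : 0 < (∑ i, x i) ^ 2 := by linarith [two_mul_sum_powersetCard_two_prod x]
  exact (sum_nonneg fun i _ => hx i).lt_of_ne' (pow_ne_zero_iff two_ne_zero |>.1 sq_sum_pos.ne')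

end SymmetricFunctions

section ConcaveDerivative

theorem sq_sub_mul_lineMap_sub_le_of_concaveOn {𝕜 : Type*} [Field 𝕜] [LinearOrder 𝕜]
    [IsStrictOrderedRing 𝕜] {S : Set 𝕜} {g : 𝕜 → 𝕜} (hg : ConcaveOn 𝕜 S g) {a b t s : 𝕜}
    (ha : a ∈ S) (hab : a < b) (htb : t ≤ b) (hs : 0 < s) (ht : lineMap a t s ∈ S)
    (hb : lineMap a b s ∈ S) :
    (t - a) ^ 2 * (g (lineMap a b s) - g a) ≤ (b - a) * (t - a) * (g (lineMap a t s) - g a) := by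
  rcases eq_or_ne t a with rfl | hta
  · simp
  have slope_le : slope g a (lineMap a b s) ≤ slope g a (lineMap a t s) :=
    hg.slope_anti ha ⟨ht, fun h => (AffineMap.lineMap_eq_left_iff.1 h).elim hta.symm hs.ne'⟩
      ⟨hb, ((left_lt_lineMap_iff_lt hs).2 hab).ne'⟩ (lineMap_mono_right htb hs.le)
  have sub_eq (c : 𝕜) :
      g (lineMap a c s) - g a = s * (c - a) * slope g a (lineMap a c s) := by
    rw [← vsub_eq_sub, ← sub_smul_slope, AffineMap.lineMap_apply_ring', add_sub_cancel_right,
      smul_eq_mul]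
  have : 0 ≤ b - a := (sub_pos.2 hab).le
  calc (t - a) ^ 2 * (g (lineMap a b s) - g a)
      = (t - a) ^ 2 * (s * (b - a)) * slope g a (lineMap a b s) := by rw [sub_eq]; ring
    _ ≤ (t - a) ^ 2 * (s * (b - a)) * slope g a (lineMap a t s) := by gcongr
    _ = (b - a) * (t - a) * (g (lineMap a t s) - g a) := by rw [sub_eq]; ring

variable {S : Set ℝ} {f f' : ℝ → ℝ} {a b : ℝ}

theorem sq_sub_mul_sub_le_of_concaveOn_deriv (hS : Convex ℝ S) (hf : ContinuousOn f S)
    (hff' : ∀ t ∈ interior S, HasDerivAt f (f' t) t) (hf' : ConcaveOn ℝ (interior S) f')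
    (ha : a ∈ interior S) (hfa : f' a = 0) {t : ℝ} (hb : b ∈ S) (ht : t ∈ S) (hab : a < b)
    (htb : t ≤ b) :
    (t - a) ^ 2 * (f b - f a) ≤ (b - a) ^ 2 * (f t - f a) := by
  let G : ℝ → ℝ := fun s => (b - a) ^ 2 * f (lineMap a t s) - (t - a) ^ 2 * f (lineMap a b s)
  have continuousOn_comp {c : ℝ} (hc : c ∈ S) :
      ContinuousOn (fun s : ℝ => f (lineMap a c s)) (Set.Icc 0 1) :=
    hf.comp AffineMap.lineMap_continuous.continuousOn
      fun _ hs => hS.lineMap_mem (interior_subset ha) hc hs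
  have lineMap_mem {c s : ℝ} (hc : c ∈ S) (hs : s ∈ Set.Ioo (0 : ℝ) 1) :
      lineMap a c s ∈ interior S :=
    hS.openSegment_interior_self_subset_interior ha hc (lineMap_mem_openSegment ℝ a c hs)
  have hasDerivAt_comp {c s : ℝ} (hc : c ∈ S) (hs : s ∈ Set.Ioo (0 : ℝ) 1) :
      HasDerivAt (fun s : ℝ => f (lineMap a c s)) (f' (lineMap a c s) * (c - a)) s :=
    (hff' _ (lineMap_mem hc hs)).comp s AffineMap.hasDerivAt_lineMap
  have deriv_nonneg {s : ℝ} (hs : s ∈ Set.Ioo (0 : ℝ) 1) :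
      0 ≤ (b - a) ^ 2 * (f' (lineMap a t s) * (t - a))
        - (t - a) ^ 2 * (f' (lineMap a b s) * (b - a)) := by
    have secants := sq_sub_mul_lineMap_sub_le_of_concaveOn hf' ha hab htb hs.1
      (lineMap_mem ht hs) (lineMap_mem hb hs)
    rw [hfa, sub_zero, sub_zero] at secants
    linear_combination (b - a) * secants
  have mono : MonotoneOn G (Set.Icc 0 1) :=
    monotoneOn_of_hasDerivWithinAt_nonneg (convex_Icc 0 1)
      (((continuousOn_comp ht).const_mul _).sub ((continuousOn_comp hb).const_mul _))
      (fun s hs => by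
        rw [interior_Icc] at hs
        exact (((hasDerivAt_comp ht hs).const_mul _).sub
          ((hasDerivAt_comp hb hs).const_mul _)).hasDerivWithinAt)
      fun s hs => deriv_nonneg (by rwa [interior_Icc] at hs)
  have G_zero_le_G_one :=
    mono (Set.left_mem_Icc.2 zero_le_one) (Set.right_mem_Icc.2 zero_le_one) zero_le_one
  simp only [G, AffineMap.lineMap_apply_zero, AffineMap.lineMap_apply_one] at G_zero_le_G_one
  linarith

theorem sub_le_sum_sub_of_concaveOn_deriv (hS : Convex ℝ S) (hf : ContinuousOn f S)
    (hff' : ∀ t ∈ interior S, HasDerivAt f (f' t) t) (hf' : ConcaveOn ℝ (interior S) f')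
    (ha : a ∈ interior S) (hfa : f' a = 0) (hb : b ∈ S) (hab : a ≤ b)
    {ι : Type*} {s : Finset ι} {x : ι → ℝ} (hx : ∀ i ∈ s, x i ∈ S)
    (hsq : ∑ i ∈ s, (x i - a) ^ 2 = (b - a) ^ 2) :
    f b - f a ≤ ∑ i ∈ s, (f (x i) - f a) := by
  have sq_le : ∀ i ∈ s, (x i - a) ^ 2 ≤ (b - a) ^ 2 := fun i hi =>
    hsq ▸ single_le_sum (fun j _ => sq_nonneg (x j - a)) hi
  have le_b : ∀ i ∈ s, x i ≤ b := fun i hi => by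
    linarith [abs_le_of_sq_le_sq' (sq_le i hi) (sub_nonneg.2 hab)]
  rcases hab.eq_or_lt with rfl | hlt
  · have eq_a : ∀ i ∈ s, x i = a := fun i hi => by
      simpa [sub_eq_zero] using sq_le i hi
    rw [sum_eq_zero fun i hi => by rw [eq_a i hi, sub_self], sub_self]
  · have hpos : 0 < (b - a) ^ 2 := pow_pos (sub_pos.2 hlt) 2
    refine le_of_mul_le_mul_left ?_ hpos
    calc (b - a) ^ 2 * (f b - f a) = ∑ i ∈ s, (x i - a) ^ 2 * (f b - f a) := by
          rw [← hsq, sum_mul]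
      _ ≤ ∑ i ∈ s, (b - a) ^ 2 * (f (x i) - f a) := sum_le_sum fun i hi =>
          sq_sub_mul_sub_le_of_concaveOn_deriv hS hf hff' hf' ha hfa hb (hx i hi) hlt (le_b i hi)
      _ = (b - a) ^ 2 * ∑ i ∈ s, (f (x i) - f a) := (mul_sum ..).symm

theorem card_sub_one_mul_add_le_sum_of_concaveOn_deriv (hS : Convex ℝ S) (hf : ContinuousOn f S)
    (hff' : ∀ t ∈ interior S, HasDerivAt f (f' t) t) (hf' : ConcaveOn ℝ (interior S) f')
    (ha : a ∈ interior S) (hb : b ∈ S) (hab : a ≤ b)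
    {ι : Type*} {s : Finset ι} {x : ι → ℝ} (hx : ∀ i ∈ s, x i ∈ S)
    (hsum : ∑ i ∈ s, x i = (#s - 1) * a + b)
    (hsq : ∑ i ∈ s, x i ^ 2 = (#s - 1) * a ^ 2 + b ^ 2) :
    (#s - 1) * f a + f b ≤ ∑ i ∈ s, f (x i) := by
  have dev_sq : ∑ i ∈ s, (x i - a) ^ 2 = (b - a) ^ 2 := by
    simp only [sub_sq, sum_add_distrib, sum_sub_distrib, ← sum_mul, ← mul_sum, sum_const,
      nsmul_eq_mul, hsum, hsq]
    ring
  have tangent_removed := sub_le_sum_sub_of_concaveOn_deriv (f := fun t => f t - f' a * t)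
    (f' := fun t => f' t - f' a) hS (hf.sub (continuousOn_id.const_mul _))
    (fun t ht => (hff' t ht).sub (by simpa using (hasDerivAt_id t).const_mul (f' a)))
    (hf'.sub (convexOn_const _ hf'.1)) ha (sub_self _) hb hab hx dev_sq
  simp only [sum_sub_distrib, ← mul_sum, sum_const, nsmul_eq_mul, hsum] at tangent_removed
  linarith

end ConcaveDerivative

theorem sum_negMulLog_le {ι : Type*} {s : Finset ι} {x : ι → ℝ} {a b : ℝ}
    (hx : ∀ i ∈ s, 0 ≤ x i) (ha : 0 < a) (hab : a ≤ b)
    (hsum : ∑ i ∈ s, x i = (#s - 1) * a + b)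
    (hsq : ∑ i ∈ s, x i ^ 2 = (#s - 1) * a ^ 2 + b ^ 2) :
    ∑ i ∈ s, negMulLog (x i) ≤ (#s - 1) * negMulLog a + negMulLog b := by
  have concave_log : ConcaveOn ℝ (interior (Set.Ici 0)) fun t => log t + 1 := by
    rw [interior_Ici]
    exact strictConcaveOn_log_Ioi.concaveOn.add_const 1
  have sum_mul_log := card_sub_one_mul_add_le_sum_of_concaveOn_deriv (convex_Ici 0)
    continuous_mul_log.continuousOn
    (fun t ht => hasDerivAt_mul_log (by rw [interior_Ici] at ht; exact ht.ne')) concave_log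
    (by rwa [interior_Ici]) (ha.le.trans hab) hab hx hsum hsq
  simp only [negMulLog_eq_neg, sum_neg_distrib]
  linarith

section TwoValuedTuple

/-- The smaller value `a` of the tuple `(a, …, a, b)` of length `d`, `a` being repeated `d - 1`
times, whose first two elementary symmetric polynomials are `p` and `q`: the smaller root of
`d * (d - 1) * a ^ 2 - 2 * (d - 1) * p * a + 2 * q`. The larger value is
`b = p - (d - 1) * a`. -/
noncomputable def repeatedValue (d p q : ℝ) : ℝ :=
  ((d - 1) * p - √((d - 1) ^ 2 * p ^ 2 - 2 * q * d * (d - 1))) / (d * (d - 1))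

variable {d p q : ℝ}

theorem repeatedValue_pos (hd : 1 < d) (hp : 0 < p) (hq : 0 < q) : 0 < repeatedValue d p q := by
  have : 0 < d - 1 := sub_pos.2 hd
  have sqrt_lt : √((d - 1) ^ 2 * p ^ 2 - 2 * q * d * (d - 1)) < (d - 1) * p := by
    rw [sqrt_lt' (by positivity), mul_pow]
    exact sub_lt_self _ (by positivity)
  exact div_pos (sub_pos.2 sqrt_lt) (by positivity)

theorem sqrt_eq_sub_one_mul_sub_repeatedValue (hd : 1 < d) :
    √((d - 1) ^ 2 * p ^ 2 - 2 * q * d * (d - 1)) = (d - 1) * (p - d * repeatedValue d p q) := by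
  have hd' : d - 1 ≠ 0 := (sub_pos.2 hd).ne'
  rw [repeatedValue]
  field_simp
  ring

theorem repeatedValue_le (hd : 1 < d) :
    repeatedValue d p q ≤ p - (d - 1) * repeatedValue d p q := by
  have root_nonneg : 0 ≤ (d - 1) * (p - d * repeatedValue d p q) :=
    sqrt_eq_sub_one_mul_sub_repeatedValue hd ▸ sqrt_nonneg _
  linarith [nonneg_of_mul_nonneg_right root_nonneg (sub_pos.2 hd)]

theorem sub_one_mul_repeatedValue_sq_add_sq (hd : 1 < d) (hpq : 2 * d * q ≤ (d - 1) * p ^ 2) :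
    (d - 1) * repeatedValue d p q ^ 2 + (p - (d - 1) * repeatedValue d p q) ^ 2
      = p ^ 2 - 2 * q := by
  have : 0 < d - 1 := sub_pos.2 hd
  have discrim_nonneg : 0 ≤ (d - 1) ^ 2 * p ^ 2 - 2 * q * d * (d - 1) := by
    linear_combination (d - 1) * hpq
  have discrim_eq := sq_sqrt discrim_nonneg
  rw [sqrt_eq_sub_one_mul_sub_repeatedValue hd] at discrim_eq
  apply mul_left_cancel₀ (show d * (d - 1) ≠ 0 by positivity)
  linear_combination discrim_eq

theorem sum_comp_ite_lt_sub_one {α R : Type*} [Ring R] {n : ℕ} (hn : 1 ≤ n) (a b : α)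
    (g : α → R) :
    ∑ i : Fin n, g (if (i : ℕ) < n - 1 then a else b) = ((n : R) - 1) * g a + g b := by
  obtain ⟨m, rfl⟩ := Nat.exists_eq_add_of_le' hn
  simp [Fin.sum_univ_castSucc]

end TwoValuedTuple

/-- At a zero entry `0 * log 0 = 0` is the usual convention of information theory: it extends
`t * log t` continuously to `0`. -/
theorem entropy_upper_bound_e1_e2_general (d : ℕ) (hd : 2 ≤ d) (x : Fin d → ℝ)
    (hx : ∀ i, 0 ≤ x i)
    (e : ℕ → ℝ)
    (he : ∀ k, e k = ∑ t ∈ powersetCard k (univ : Finset (Fin d)), ∏ i ∈ t, x i)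
    (he2 : 0 < e 2)
    (a b : ℝ)
    (ha : a = (((d : ℝ) - 1) * e 1
      - √(((d : ℝ) - 1) ^ 2 * (e 1) ^ 2 - 2 * e 2 * d * ((d : ℝ) - 1)))
        / ((d : ℝ) * ((d : ℝ) - 1)))
    (hb : b = e 1 - ((d : ℝ) - 1) * a)
    (y : Fin d → ℝ) (hy : y = fun i : Fin d => if (i : ℕ) < d - 1 then a else b) :
    0 < a ∧ 0 < b ∧
    (-∑ i, x i * log (x i)) ≤ -((d : ℝ) - 1) * a * log a - b * log b ∧
    (∑ t ∈ powersetCard 1 (univ : Finset (Fin d)), ∏ i ∈ t, y i) = e 1 ∧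
    (∑ t ∈ powersetCard 2 (univ : Finset (Fin d)), ∏ i ∈ t, y i) = e 2 ∧
    (-∑ i, y i * log (y i)) = -((d : ℝ) - 1) * a * log a - b * log b := by
  have hd' : (1 : ℝ) < d := by exact_mod_cast hd
  have e_one : e 1 = ∑ i, x i := by simp [he, powersetCard_one]
  have sum_sq : ∑ i, x i ^ 2 = e 1 ^ 2 - 2 * e 2 := by
    rw [he 2, two_mul_sum_powersetCard_two_prod, e_one, sub_sub_cancel]
  have e_one_pos : 0 < e 1 :=
    e_one ▸ sum_pos_of_sum_powersetCard_two_prod_pos hx (he 2 ▸ he2)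
  have maclaurin : 2 * d * e 2 ≤ (d - 1) * e 1 ^ 2 := by
    simpa [he 2, e_one] using two_mul_card_mul_sum_powersetCard_two_prod_le x
  have a_pos : 0 < a := ha ▸ repeatedValue_pos hd' e_one_pos he2
  have a_le_b : a ≤ b := by rw [hb, ha]; exact repeatedValue_le hd'
  have ab_sum : (d - 1) * a + b = e 1 := by rw [hb]; ring
  have ab_sum_sq : (d - 1) * a ^ 2 + b ^ 2 = e 1 ^ 2 - 2 * e 2 := by
    rw [hb, ha]; exact sub_one_mul_repeatedValue_sq_add_sq hd' maclaurin
  have y_sum (g : ℝ → ℝ) : ∑ i, g (y i) = (d - 1) * g a + g b := by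
    rw [hy]; exact sum_comp_ite_lt_sub_one (by lia) a b g
  refine ⟨a_pos, a_pos.trans_le a_le_b, ?_, ?_, ?_, ?_⟩
  · have entropy_le := sum_negMulLog_le (s := univ) (fun i _ => hx i) a_pos a_le_b
      (by simp [ab_sum, e_one]) (by simp [ab_sum_sq, sum_sq])
    simp only [negMulLog_eq_neg, sum_neg_distrib, card_univ, Fintype.card_fin] at entropy_le
    linarith
  · simpa [powersetCard_one, ab_sum] using y_sum id
  · have two_mul_esymm_two := two_mul_sum_powersetCard_two_prod y
    rw [y_sum fun t => t, y_sum (· ^ 2), ab_sum, ab_sum_sq] at two_mul_esymm_two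
    linarith
  · rw [y_sum fun t => t * log t]
    ring

/-- **Optimal upper bound on the entropy depending only on `e₁` and `e₂`.**
For `d ≥ 2` and positive reals `x₁, …, x_d` with `e₂ > 0`, let
`a = ((d−1)e₁ − √((d−1)²e₁² − 2e₂d(d−1)))/(d(d−1))` and `b = e₁ − (d−1)a`.
Then `a, b > 0` and `H(x) ≤ −(d−1)a ln a − b ln b`. Moreover the bound is
attained by the tuple `(a, …, a, b)` (`a` repeated `d−1` times), which has
the same `e₁` and `e₂`; hence it is the tightest bound depending only on
`e₁` and `e₂`. -/
theorem entropy_upper_bound_e1_e2 (d : ℕ) (hd : 2 ≤ d) (x : Fin d → ℝ)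
    (hx : ∀ i, 0 < x i)
    (e : ℕ → ℝ)
    (he : ∀ k, e k = ∑ t ∈ Finset.powersetCard k (Finset.univ : Finset (Fin d)),
      ∏ i ∈ t, x i)
    (he2 : 0 < e 2)
    (a b : ℝ)
    (ha : a = (((d : ℝ) - 1) * e 1
      - Real.sqrt (((d : ℝ) - 1) ^ 2 * (e 1) ^ 2 - 2 * e 2 * d * ((d : ℝ) - 1)))
        / ((d : ℝ) * ((d : ℝ) - 1)))
    (hb : b = e 1 - ((d : ℝ) - 1) * a)
    (y : Fin d → ℝ) (hy : y = fun i : Fin d => if (i : ℕ) < d - 1 then a else b) :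
    0 < a ∧ 0 < b ∧
    (-∑ i, x i * Real.log (x i)) ≤ -((d : ℝ) - 1) * a * Real.log a - b * Real.log b ∧
    (∑ t ∈ Finset.powersetCard 1 (Finset.univ : Finset (Fin d)), ∏ i ∈ t, y i) = e 1 ∧
    (∑ t ∈ Finset.powersetCard 2 (Finset.univ : Finset (Fin d)), ∏ i ∈ t, y i) = e 2 ∧
    (-∑ i, y i * Real.log (y i)) = -((d : ℝ) - 1) * a * Real.log a - b * Real.log b :=
  entropy_upper_bound_e1_e2_general d hd x (fun i => (hx i).le) e he he2 a b ha hb y hy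
end
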